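/- Let f : ℝ^d → ℝ be differentiable and let ∇f(·;·) be a stochastic gradient map satisfying unbiasedness, bounded variance σ², and mean-squared smoothness with constant L̄. Fix p ∈ (0,1], B ≥ 1, and points x, y ∈ ℝ^d and a vector g ∈ ℝ^d. Let ξ₁, …, ξ_B be i.i.d. samples from μ and define G = (1/B)∑_{j=1}^B ∇f(y;ξ_j) + (1−p)(g − (1/B)∑_{j=1}^B ∇f(x;ξ_j)). Then E[‖G − ∇f(y)‖²] ≤ (1−p)²‖g − ∇f(x)‖² + 2p²σ²/B + (2(1−p)²L̄²/B)‖y − x‖². -/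

import Mathlib

open MeasureTheory

/-! With `Z = ∇f(y;·) - (1 - p) ∇f(x;·)`, the estimator is `(1 - p) g` plus the sample mean of `Z`.
Its bias is therefore `(1 - p)(g - ∇f(x))` and its variance is `Var Z / B`. Finally,
`Z = p ∇f(y;·) + (1 - p)(∇f(y;·) - ∇f(x;·))`, where the variance of the first term is controlled by
`σ²` and that of the second by its second moment, hence by mean-squared smoothness. -/

open ProbabilityTheory

section NormedSpace

variable {Ω Ω' E : Type*} [MeasurableSpace Ω] [MeasurableSpace Ω'] [NormedAddCommGroup E]
  {μ : Measure Ω} {P : Measure Ω'} {φ : Ω' → Ω} {X Y : Ω → E}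

lemma isProbabilityMeasure_of_measurePreserving [IsProbabilityMeasure P]
    (hφ : MeasurePreserving φ P μ) : IsProbabilityMeasure μ :=
  hφ.map_eq ▸ Measure.isProbabilityMeasure_map hφ.aemeasurable

lemma memLp_two_of_integrable_norm_sub_sq [IsFiniteMeasure μ] (hX : AEStronglyMeasurable X μ)
    {c : E} (h_sq : Integrable (fun ω ↦ ‖X ω - c‖ ^ 2) μ) : MemLp X 2 μ := by
  have h_sub : MemLp (X - fun _ ↦ c) 2 μ :=
    (memLp_two_iff_integrable_sq_norm (hX.sub aestronglyMeasurable_const)).2 h_sq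
  simpa only [sub_add_cancel] using h_sub.add (memLp_const c)

variable [NormedSpace ℝ E]

lemma integral_comp_measurePreserving (hφ : MeasurePreserving φ P μ)
    (hX : AEStronglyMeasurable X μ) : ∫ ω, X (φ ω) ∂P = μ[X] := by
  rw [← hφ.map_eq] at hX ⊢
  exact (integral_map hφ.aemeasurable hX).symm

/-- The total variance `E‖X - E X‖²` of a random vector: in a Hilbert space, the trace of its
covariance operator. Both integrals are Bochner integrals, so it is meaningful for `X ∈ L²` only. -/
noncomputable def totalVariance (X : Ω → E) (μ : Measure Ω) : ℝ :=
  ∫ ω, ‖X ω - μ[X]‖ ^ 2 ∂μ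

lemma totalVariance_const_smul (c : ℝ) (X : Ω → E) (μ : Measure Ω) :
    totalVariance (c • X) μ = c ^ 2 * totalVariance X μ := by
  simp only [totalVariance, Pi.smul_apply, integral_smul, ← smul_sub, norm_smul, mul_pow,
    Real.norm_eq_abs, sq_abs, integral_const_mul]

lemma totalVariance_comp_measurePreserving (hφ : MeasurePreserving φ P μ)
    (hX : AEStronglyMeasurable X μ) : totalVariance (X ∘ φ) P = totalVariance X μ := by
  simp only [totalVariance, Function.comp_apply, integral_comp_measurePreserving hφ hX]
  exact integral_comp_measurePreserving hφ
    ((hX.sub aestronglyMeasurable_const).norm.pow 2)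

lemma totalVariance_add_le [IsFiniteMeasure μ] (hX : MemLp X 2 μ) (hY : MemLp Y 2 μ) :
    totalVariance (X + Y) μ ≤ 2 * (totalVariance X μ + totalVariance Y μ) := by
  have hX_sq : Integrable (fun ω ↦ ‖X ω - μ[X]‖ ^ 2) μ :=
    (hX.sub (memLp_const _)).integrable_norm_pow two_ne_zero
  have hY_sq : Integrable (fun ω ↦ ‖Y ω - μ[Y]‖ ^ 2) μ :=
    (hY.sub (memLp_const _)).integrable_norm_pow two_ne_zero
  have hXY_sq : Integrable (fun ω ↦ ‖(X + Y) ω - μ[X + Y]‖ ^ 2) μ :=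
    ((hX.add hY).sub (memLp_const _)).integrable_norm_pow two_ne_zero
  have h_mean : μ[X + Y] = μ[X] + μ[Y] :=
    integral_add (hX.integrable one_le_two) (hY.integrable one_le_two)
  simp only [totalVariance]
  rw [← integral_add hX_sq hY_sq, ← integral_const_mul]
  refine integral_mono hXY_sq ((hX_sq.add hY_sq).const_mul 2) fun ω ↦ ?_
  calc ‖(X + Y) ω - μ[X + Y]‖ ^ 2
      = ‖(X ω - μ[X]) + (Y ω - μ[Y])‖ ^ 2 := by rw [h_mean, Pi.add_apply, add_sub_add_comm]
    _ ≤ (‖X ω - μ[X]‖ + ‖Y ω - μ[Y]‖) ^ 2 := by gcongr; exact norm_add_le _ _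
    _ ≤ 2 * (‖X ω - μ[X]‖ ^ 2 + ‖Y ω - μ[Y]‖ ^ 2) := add_sq_le

end NormedSpace

section InnerProductSpace

variable {Ω ι E : Type*} [MeasurableSpace Ω] [NormedAddCommGroup E] [InnerProductSpace ℝ E]
  {μ : Measure Ω} {X Y : Ω → E}

lemma integrable_inner_of_memLp_two (hX : MemLp X 2 μ) (hY : MemLp Y 2 μ) :
    Integrable (fun ω ↦ inner ℝ (X ω) (Y ω)) μ :=
  (hX.norm.integrable_mul hY.norm).mono' (hX.aestronglyMeasurable.inner hY.aestronglyMeasurable)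
    (ae_of_all _ fun _ ↦ norm_inner_le_norm _ _)

variable [CompleteSpace E]

lemma integral_norm_sub_sq_eq_add_totalVariance [IsProbabilityMeasure μ] (hX : MemLp X 2 μ)
    (c : E) : ∫ ω, ‖X ω - c‖ ^ 2 ∂μ = ‖μ[X] - c‖ ^ 2 + totalVariance X μ := by
  have hX_int : Integrable X μ := hX.integrable one_le_two
  have h_centered : Integrable (fun ω ↦ X ω - μ[X]) μ := hX_int.sub (integrable_const _)
  have h_sq : Integrable (fun ω ↦ ‖X ω - μ[X]‖ ^ 2) μ :=
    (hX.sub (memLp_const _)).integrable_norm_pow two_ne_zero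
  have h_cross : Integrable (fun ω ↦ 2 * inner ℝ (μ[X] - c) (X ω - μ[X])) μ :=
    (h_centered.const_inner _).const_mul 2
  have h_affine : Integrable (fun ω ↦ ‖μ[X] - c‖ ^ 2 + 2 * inner ℝ (μ[X] - c) (X ω - μ[X])) μ :=
    (integrable_const _).add h_cross
  have h_cross_zero : ∫ ω, 2 * inner ℝ (μ[X] - c) (X ω - μ[X]) ∂μ = 0 := by
    rw [integral_const_mul, integral_inner h_centered, integral_sub hX_int (integrable_const _)]
    simp
  calc ∫ ω, ‖X ω - c‖ ^ 2 ∂μ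
      = ∫ ω, (‖μ[X] - c‖ ^ 2 + 2 * inner ℝ (μ[X] - c) (X ω - μ[X])
          + ‖X ω - μ[X]‖ ^ 2) ∂μ := by
        congr with ω
        rw [← norm_add_sq_real, sub_add_sub_cancel']
    _ = ‖μ[X] - c‖ ^ 2 + totalVariance X μ := by
        rw [integral_add h_affine h_sq, integral_add (integrable_const _) h_cross, h_cross_zero,
          integral_const, probReal_univ, one_smul, add_zero, totalVariance]

lemma totalVariance_le_integral_norm_sq [IsProbabilityMeasure μ] (hX : MemLp X 2 μ) :
    totalVariance X μ ≤ ∫ ω, ‖X ω‖ ^ 2 ∂μ := by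
  have h := integral_norm_sub_sq_eq_add_totalVariance hX 0
  simp only [sub_zero] at h
  exact h ▸ le_add_of_nonneg_left (sq_nonneg _)

lemma integral_inner_sub_integral_eq_zero_of_indepFun [IsProbabilityMeasure μ] [MeasurableSpace E]
    [BorelSpace E] (hX : Integrable X μ) (hY : Integrable Y μ) (hXY : X ⟂ᵢ[μ] Y) :
    ∫ ω, inner ℝ (X ω - μ[X]) (Y ω - μ[Y]) ∂μ = 0 := by
  have h_centered_indep : (fun ω ↦ X ω - μ[X]) ⟂ᵢ[μ] (fun ω ↦ Y ω - μ[Y]) :=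
    hXY.comp (measurable_id.sub_const (∫ ω, X ω ∂μ)) (measurable_id.sub_const (∫ ω, Y ω ∂μ))
  have h_mean_zero : ∫ ω, (X ω - μ[X]) ∂μ = 0 := by
    simp [integral_sub hX (integrable_const _)]
  calc ∫ ω, inner ℝ (X ω - μ[X]) (Y ω - μ[Y]) ∂μ
      = inner ℝ (∫ ω, (X ω - μ[X]) ∂μ) (∫ ω, (Y ω - μ[Y]) ∂μ) :=
        h_centered_indep.integral_bilin (hX.sub (integrable_const _))
          (hY.sub (integrable_const _)) (innerSL ℝ)
    _ = 0 := by rw [h_mean_zero, inner_zero_left]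

lemma totalVariance_sum_of_pairwise_indepFun [IsProbabilityMeasure μ] [MeasurableSpace E]
    [BorelSpace E] {X : ι → Ω → E} {s : Finset ι} (hX : ∀ i ∈ s, MemLp (X i) 2 μ)
    (h_indep : Set.Pairwise s fun i j ↦ X i ⟂ᵢ[μ] X j) :
    totalVariance (∑ i ∈ s, X i) μ = ∑ i ∈ s, totalVariance (X i) μ := by
  have h_int i (hi : i ∈ s) : Integrable (X i) μ := (hX i hi).integrable one_le_two
  have h_mean : μ[∑ i ∈ s, X i] = ∑ i ∈ s, μ[X i] := by
    simp only [Finset.sum_apply, integral_finsetSum s h_int]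
  have h_inner i (hi : i ∈ s) j (hj : j ∈ s) :
      Integrable (fun ω ↦ inner ℝ (X i ω - μ[X i]) (X j ω - μ[X j])) μ :=
    integrable_inner_of_memLp_two ((hX i hi).sub (memLp_const _))
      ((hX j hj).sub (memLp_const _))
  calc totalVariance (∑ i ∈ s, X i) μ
      = ∫ ω, ∑ i ∈ s, ∑ j ∈ s, inner ℝ (X i ω - μ[X i]) (X j ω - μ[X j]) ∂μ := by
        rw [totalVariance, h_mean]
        simp only [Finset.sum_apply, ← Finset.sum_sub_distrib, ← real_inner_self_eq_norm_sq,
          sum_inner]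
        simp only [inner_sum]
    _ = ∑ i ∈ s, ∑ j ∈ s, ∫ ω, inner ℝ (X i ω - μ[X i]) (X j ω - μ[X j]) ∂μ := by
        rw [integral_finsetSum s fun i hi ↦ integrable_finsetSum s (h_inner i hi)]
        exact Finset.sum_congr rfl fun i hi ↦ integral_finsetSum s (h_inner i hi)
    _ = ∑ i ∈ s, totalVariance (X i) μ := by
        refine Finset.sum_congr rfl fun i hi ↦ ?_
        have h_cross_zero j (hj : j ∈ s) (hji : j ≠ i) :
            ∫ ω, inner ℝ (X i ω - μ[X i]) (X j ω - μ[X j]) ∂μ = 0 :=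
          integral_inner_sub_integral_eq_zero_of_indepFun (h_int i hi) (h_int j hj)
            (h_indep hi hj hji.symm)
        rw [Finset.sum_eq_single_of_mem i hi h_cross_zero]
        simp only [real_inner_self_eq_norm_sq, totalVariance]

end InnerProductSpace

section Estimators

variable {Ω Ω' ι E : Type*} [Fintype ι] [AddCommGroup E] [Module ℝ E]

/-- The empirical mean `n⁻¹ ∑ⱼ X(ξⱼ)` of `X` over the `n` samples `ξ`, as a random vector on the
space carrying the samples. It is `0` for an empty family of samples. -/
noncomputable def sampleMean (ξ : ι → Ω' → Ω) (X : Ω → E) (ω : Ω') : E :=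
  (Fintype.card ι : ℝ)⁻¹ • ∑ j, X (ξ j ω)

lemma sampleMean_eq_smul_sum (ξ : ι → Ω' → Ω) (X : Ω → E) :
    sampleMean ξ X = (Fintype.card ι : ℝ)⁻¹ • ∑ j, X ∘ ξ j := by
  ext ω
  simp [sampleMean]

lemma sampleMean_sub (ξ : ι → Ω' → Ω) (X Y : Ω → E) :
    sampleMean ξ (X - Y) = sampleMean ξ X - sampleMean ξ Y := by
  ext ω
  simp [sampleMean, smul_sub]

lemma sampleMean_const_smul (ξ : ι → Ω' → Ω) (c : ℝ) (X : Ω → E) :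
    sampleMean ξ (c • X) = c • sampleMean ξ X := by
  ext ω
  simp [sampleMean, ← Finset.smul_sum, smul_comm c]

/-- The momentum variance reduction (MVR) estimator with momentum parameter `p`, previous estimate
`g` and samples `ξ`; `U` and `V` are the stochastic gradients at the new and the old point. -/
noncomputable def mvrEstimator (ξ : ι → Ω' → Ω) (p : ℝ) (g : E) (U V : Ω → E) (ω : Ω') : E :=
  sampleMean ξ U ω + (1 - p) • (g - sampleMean ξ V ω)

lemma mvrEstimator_eq_smul_add_sampleMean (ξ : ι → Ω' → Ω) (p : ℝ) (g : E) (U V : Ω → E)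
    (ω : Ω') :
    mvrEstimator ξ p g U V ω = (1 - p) • g + sampleMean ξ (U - (1 - p) • V) ω := by
  simp only [mvrEstimator, sampleMean_sub, sampleMean_const_smul, Pi.sub_apply, Pi.smul_apply]
  module

end Estimators

section SampleMean

variable {Ω Ω' ι E : Type*} [MeasurableSpace Ω] [MeasurableSpace Ω'] [Fintype ι]
  [NormedAddCommGroup E] {μ : Measure Ω} {P : Measure Ω'} {ξ : ι → Ω' → Ω} {X : Ω → E}

lemma memLp_sampleMean [NormedSpace ℝ E] {q : ENNReal} (hξ : ∀ j, MeasurePreserving (ξ j) P μ)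
    (hX : MemLp X q μ) : MemLp (sampleMean ξ X) q P := by
  rw [sampleMean_eq_smul_sum]
  exact (memLp_finsetSum' _ fun j _ ↦ hX.comp_measurePreserving (hξ j)).const_smul _

lemma integral_sampleMean [NormedSpace ℝ E] [Nonempty ι]
    (hξ : ∀ j, MeasurePreserving (ξ j) P μ) (hX : Integrable X μ) : P[sampleMean ξ X] = μ[X] := by
  have h_int j : Integrable (fun ω ↦ X (ξ j ω)) P := (hξ j).integrable_comp_of_integrable hX
  simp only [sampleMean, integral_smul, integral_finsetSum _ fun j _ ↦ h_int j,
    integral_comp_measurePreserving (hξ _) hX.aestronglyMeasurable, Finset.sum_const,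
    Finset.card_univ, ← Nat.cast_smul_eq_nsmul ℝ]
  exact inv_smul_smul₀ (Nat.cast_ne_zero.2 Fintype.card_ne_zero) _

lemma totalVariance_sampleMean [InnerProductSpace ℝ E] [CompleteSpace E] [IsProbabilityMeasure P]
    (hξ : ∀ j, MeasurePreserving (ξ j) P μ) (h_indep : Pairwise fun i j ↦ ξ i ⟂ᵢ[P] ξ j)
    (hX : MemLp X 2 μ) :
    totalVariance (sampleMean ξ X) P = totalVariance X μ / Fintype.card ι := by
  borelize E
  have hX_map j : AEMeasurable X (P.map (ξ j)) := by
    rw [(hξ j).map_eq]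
    exact hX.aestronglyMeasurable.aemeasurable
  have h_sum : totalVariance (∑ j, X ∘ ξ j) P = ∑ j, totalVariance (X ∘ ξ j) P :=
    totalVariance_sum_of_pairwise_indepFun (fun j _ ↦ hX.comp_measurePreserving (hξ j))
      fun i _ j _ hij ↦ (h_indep hij).comp₀ (hξ i).aemeasurable (hξ j).aemeasurable
        (hX_map i) (hX_map j)
  rw [sampleMean_eq_smul_sum, totalVariance_const_smul, h_sum]
  simp only [totalVariance_comp_measurePreserving (hξ _) hX.aestronglyMeasurable,
    Finset.sum_const, Finset.card_univ, nsmul_eq_mul]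
  field

end SampleMean

section MVR

variable {Ω Ω' ι E : Type*} [MeasurableSpace Ω] [MeasurableSpace Ω'] [Fintype ι]
  [NormedAddCommGroup E] [InnerProductSpace ℝ E] [CompleteSpace E]
  {μ : Measure Ω} {P : Measure Ω'} {ξ : ι → Ω' → Ω} {U V : Ω → E}

lemma totalVariance_sub_one_sub_smul_le [IsProbabilityMeasure μ] (hU : MemLp U 2 μ)
    (hV : MemLp V 2 μ) (p : ℝ) :
    totalVariance (U - (1 - p) • V) μ
      ≤ 2 * p ^ 2 * totalVariance U μ + 2 * (1 - p) ^ 2 * ∫ ω, ‖U ω - V ω‖ ^ 2 ∂μ :=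
  calc totalVariance (U - (1 - p) • V) μ
      = totalVariance (p • U + (1 - p) • (U - V)) μ := by congr 1; module
    _ ≤ 2 * (totalVariance (p • U) μ + totalVariance ((1 - p) • (U - V)) μ) :=
        totalVariance_add_le (hU.const_smul p) ((hU.sub hV).const_smul (1 - p))
    _ = 2 * p ^ 2 * totalVariance U μ + 2 * (1 - p) ^ 2 * totalVariance (U - V) μ := by
        rw [totalVariance_const_smul, totalVariance_const_smul]
        ring
    _ ≤ 2 * p ^ 2 * totalVariance U μ + 2 * (1 - p) ^ 2 * ∫ ω, ‖U ω - V ω‖ ^ 2 ∂μ := by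
        gcongr
        exact totalVariance_le_integral_norm_sq (hU.sub hV)

lemma integral_norm_mvrEstimator_sub_sq_eq [Nonempty ι] [IsProbabilityMeasure P]
    (hξ : ∀ j, MeasurePreserving (ξ j) P μ) (h_indep : Pairwise fun i j ↦ ξ i ⟂ᵢ[P] ξ j)
    (hU : MemLp U 2 μ) (hV : MemLp V 2 μ) (p : ℝ) (g : E) :
    ∫ ω, ‖mvrEstimator ξ p g U V ω - μ[U]‖ ^ 2 ∂P
      = (1 - p) ^ 2 * ‖g - μ[V]‖ ^ 2
        + totalVariance (U - (1 - p) • V) μ / Fintype.card ι := by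
  have : IsProbabilityMeasure μ :=
    isProbabilityMeasure_of_measurePreserving (hξ (Classical.arbitrary ι))
  have hZ : MemLp (U - (1 - p) • V) 2 μ := hU.sub (hV.const_smul (1 - p))
  have h_bias : μ[U - (1 - p) • V] - (μ[U] - (1 - p) • g) = (1 - p) • (g - μ[V]) := by
    rw [integral_sub' (hU.integrable one_le_two) ((hV.const_smul (1 - p)).integrable one_le_two)]
    simp only [Pi.smul_apply, integral_smul]
    module
  calc ∫ ω, ‖mvrEstimator ξ p g U V ω - μ[U]‖ ^ 2 ∂P
      = ∫ ω, ‖sampleMean ξ (U - (1 - p) • V) ω - (μ[U] - (1 - p) • g)‖ ^ 2 ∂P := by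
        simp only [mvrEstimator_eq_smul_add_sampleMean, sub_sub_eq_add_sub, add_comm]
    _ = ‖(1 - p) • (g - μ[V])‖ ^ 2
          + totalVariance (U - (1 - p) • V) μ / Fintype.card ι := by
        rw [integral_norm_sub_sq_eq_add_totalVariance (memLp_sampleMean hξ hZ),
          integral_sampleMean hξ (hZ.integrable one_le_two), h_bias,
          totalVariance_sampleMean hξ h_indep hZ]
    _ = (1 - p) ^ 2 * ‖g - μ[V]‖ ^ 2
          + totalVariance (U - (1 - p) • V) μ / Fintype.card ι := by
        rw [norm_smul, mul_pow, Real.norm_eq_abs, sq_abs]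

theorem mvr_one_step_variance_bound_general {α : Type*} [PseudoMetricSpace α] [Nonempty ι]
    [IsProbabilityMeasure P] (hξ : ∀ j, MeasurePreserving (ξ j) P μ)
    (h_indep : Pairwise fun i j ↦ ξ i ⟂ᵢ[P] ξ j) {G : α → Ω → E} {m : α → E}
    (hG : ∀ x, MemLp (G x) 2 μ) (h_mean : ∀ x, μ[G x] = m x) {σ L : ℝ}
    (h_var : ∀ x, ∫ ω, ‖G x ω - m x‖ ^ 2 ∂μ ≤ σ ^ 2)
    (h_smooth : ∀ x y, ∫ ω, ‖G x ω - G y ω‖ ^ 2 ∂μ ≤ L ^ 2 * dist x y ^ 2)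
    (p : ℝ) (x y : α) (g : E) :
    ∫ ω, ‖mvrEstimator ξ p g (G y) (G x) ω - m y‖ ^ 2 ∂P
      ≤ (1 - p) ^ 2 * ‖g - m x‖ ^ 2 + 2 * p ^ 2 * σ ^ 2 / Fintype.card ι
        + 2 * (1 - p) ^ 2 * L ^ 2 / Fintype.card ι * dist y x ^ 2 := by
  have : IsProbabilityMeasure μ :=
    isProbabilityMeasure_of_measurePreserving (hξ (Classical.arbitrary ι))
  have h_totalVariance : totalVariance (G y) μ ≤ σ ^ 2 := by
    simpa only [totalVariance, h_mean] using h_var y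
  calc ∫ ω, ‖mvrEstimator ξ p g (G y) (G x) ω - m y‖ ^ 2 ∂P
      = (1 - p) ^ 2 * ‖g - m x‖ ^ 2
          + totalVariance (G y - (1 - p) • G x) μ / Fintype.card ι := by
        simpa only [h_mean] using
          integral_norm_mvrEstimator_sub_sq_eq hξ h_indep (hG y) (hG x) p g
    _ ≤ (1 - p) ^ 2 * ‖g - m x‖ ^ 2
          + (2 * p ^ 2 * totalVariance (G y) μ
            + 2 * (1 - p) ^ 2 * ∫ ω, ‖G y ω - G x ω‖ ^ 2 ∂μ) / Fintype.card ι := by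
        gcongr
        exact totalVariance_sub_one_sub_smul_le (hG y) (hG x) p
    _ ≤ (1 - p) ^ 2 * ‖g - m x‖ ^ 2
          + (2 * p ^ 2 * σ ^ 2 + 2 * (1 - p) ^ 2 * (L ^ 2 * dist y x ^ 2)) / Fintype.card ι := by
        gcongr
        exact h_smooth y x
    _ = (1 - p) ^ 2 * ‖g - m x‖ ^ 2 + 2 * p ^ 2 * σ ^ 2 / Fintype.card ι
          + 2 * (1 - p) ^ 2 * L ^ 2 / Fintype.card ι * dist y x ^ 2 := by
        ring

end MVR

/-- One-step MVR variance recursion: for the minibatch MVR estimator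
`G = (1/B)∑ⱼ ∇f(y;ξⱼ) + (1−p)(g − (1/B)∑ⱼ ∇f(x;ξⱼ))` built from `B` i.i.d. samples,
`E‖G − ∇f(y)‖² ≤ (1−p)²‖g − ∇f(x)‖² + 2p²σ²/B + 2(1−p)²L̄²‖y − x‖²/B`. -/
theorem mvr_one_step_variance_bound
    (d : ℕ) (hd : 1 ≤ d) {Ω : Type*} [MeasurableSpace Ω]
    (μ : Measure Ω) [IsProbabilityMeasure μ]
    (f : EuclideanSpace ℝ (Fin d) → ℝ) (hf : Differentiable ℝ f)
    (G : EuclideanSpace ℝ (Fin d) → Ω → EuclideanSpace ℝ (Fin d))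
    (hGmeas : Measurable fun q : (EuclideanSpace ℝ (Fin d)) × Ω => G q.1 q.2)
    (hGint : ∀ x, Integrable (G x) μ)
    (hUnbiased : ∀ x, (∫ ξ, G x ξ ∂μ) = gradient f x)
    (σ : ℝ) (hσ : 0 ≤ σ)
    (hVarInt : ∀ x, Integrable (fun ξ => ‖G x ξ - gradient f x‖ ^ 2) μ)
    (hVar : ∀ x, (∫ ξ, ‖G x ξ - gradient f x‖ ^ 2 ∂μ) ≤ σ ^ 2)
    (Lbar : ℝ) (hLbar : 0 < Lbar)
    (hMSint : ∀ x y, Integrable (fun ξ => ‖G x ξ - G y ξ‖ ^ 2) μ)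
    (hMS : ∀ x y, (∫ ξ, ‖G x ξ - G y ξ‖ ^ 2 ∂μ) ≤ Lbar ^ 2 * ‖x - y‖ ^ 2)
    (p : ℝ) (hp : p ∈ Set.Ioc (0 : ℝ) 1)
    (B : ℕ) (hB : 1 ≤ B)
    (x y g : EuclideanSpace ℝ (Fin d)) :
    (∫ ω : Fin B → Ω,
        ‖((B : ℝ)⁻¹ • ∑ j, G y (ω j)
            + (1 - p) • (g - (B : ℝ)⁻¹ • ∑ j, G x (ω j)))
          - gradient f y‖ ^ 2
        ∂(Measure.pi fun _ => μ))
      ≤ (1 - p) ^ 2 * ‖g - gradient f x‖ ^ 2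
        + 2 * p ^ 2 * σ ^ 2 / B
        + 2 * (1 - p) ^ 2 * Lbar ^ 2 / B * ‖y - x‖ ^ 2 := by
  have : Nonempty (Fin B) := Fin.pos_iff_nonempty.1 hB
  have hG z : MemLp (G z) 2 μ :=
    memLp_two_of_integrable_norm_sub_sq (hGint z).aestronglyMeasurable (hVarInt z)
  have h_indep : iIndepFun (fun (j : Fin B) (ω : Fin B → Ω) ↦ ω j) (Measure.pi fun _ ↦ μ) :=
    iIndepFun_pi (X := fun _ ↦ id) fun _ ↦ aemeasurable_id
  simpa only [mvrEstimator, sampleMean, dist_eq_norm, Fintype.card_fin] using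
    mvr_one_step_variance_bound_general (measurePreserving_eval fun _ : Fin B ↦ μ)
      (fun _ _ hij ↦ h_indep.indepFun hij) hG hUnbiased hVar
      (by simpa only [dist_eq_norm] using hMS) p x y g
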